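/- The axiom scheme spec (∀xφ → φ) is not provable from the set of axiom schemes TMM ∖ {spec, ALLeq}; moreover, even its formula-metavariable-free instance, the hypothesis-free scheme with conclusion ∀x x≡y → x≡y (x, y distinct variable metavariables, no DV conditions), is not provable from TMM ∖ {spec, ALLeq}. -/

import Mathlib

set_option autoImplicit false

/-! ## Megill-style scheme-level formalization of first-order logic -/

/-- Metavariables: variable metavariables `vr i` (standing for x_i) and
formula metavariables `fm i` (standing for φ_i). -/
inductive MV : Type
  | vr (i : ℕ) : MV
  | fm (i : ℕ) : MV
  deriving DecidableEq

/-- Metaformulas over the pure language of equality. -/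
inductive MF : Type
  | phi (i : ℕ) : MF
  | eq (i j : ℕ) : MF
  | imp (a b : MF) : MF
  | not (a : MF) : MF
  | all (i : ℕ) (a : MF) : MF
  deriving DecidableEq

/-- The set of metavariables occurring in a metaformula. -/
def MF.OC : MF → Set MV
  | .phi i => {MV.fm i}
  | .eq i j => {MV.vr i, MV.vr j}
  | .imp a b => a.OC ∪ b.OC
  | .not a => a.OC
  | .all i a => insert (MV.vr i) a.OC

/-- A scheme: finitely many hypotheses, a conclusion, and disjoint-variable
(DV) conditions given as unordered pairs of metavariables. -/
structure Scheme : Type where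
  hyps : Finset MF
  concl : MF
  dv : Set (Sym2 MV)

/-- Metavariables occurring in a scheme (in its hypotheses or conclusion). -/
def Scheme.OC (Φ : Scheme) : Set MV :=
  {m | ∃ h ∈ Φ.hyps, m ∈ h.OC} ∪ Φ.concl.OC

/-- A (type-preserving) substitution: variable metavariables go to variable
metavariables, formula metavariables go to metaformulas; it is the identity
outside a finite set. -/
structure Subst : Type where
  vr : ℕ → ℕ
  fm : ℕ → MF
  finVr : {i : ℕ | vr i ≠ i}.Finite
  finFm : {i : ℕ | fm i ≠ MF.phi i}.Finite

/-- Action of a substitution on a metaformula. -/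
def MF.substMF (σ : Subst) : MF → MF
  | .phi i => σ.fm i
  | .eq i j => .eq (σ.vr i) (σ.vr j)
  | .imp a b => .imp (a.substMF σ) (b.substMF σ)
  | .not a => .not (a.substMF σ)
  | .all i a => .all (σ.vr i) (a.substMF σ)

/-- The set of metavariables occurring in the image of a metavariable. -/
def Subst.appMV (σ : Subst) : MV → Set MV
  | .vr i => {MV.vr (σ.vr i)}
  | .fm i => (σ.fm i).OC

/-- σ is the identity on a given metavariable. -/
def Subst.Fixes (σ : Subst) : MV → Prop
  | .vr i => σ.vr i = i
  | .fm i => σ.fm i = MF.phi i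

/-- A substitution is legitimate on a scheme if it does not violate its
DV conditions. -/
def Subst.Legit (σ : Subst) (Φ : Scheme) : Prop :=
  ∀ m n : MV, s(m, n) ∈ Φ.dv → σ.appMV m ∩ σ.appMV n = ∅

/-- Propagation of DV conditions along a substitution. -/
def Subst.dvMap (σ : Subst) (D : Set (Sym2 MV)) : Set (Sym2 MV) :=
  {q | ∃ m' n' m n : MV, s(m', n') ∈ D ∧ m ∈ σ.appMV m' ∧ n ∈ σ.appMV n' ∧ q = s(m, n)}

/-- Action of a substitution on a scheme. -/
def Scheme.substS (Φ : Scheme) (σ : Subst) : Scheme :=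
  ⟨Φ.hyps.image (MF.substMF σ), Φ.concl.substMF σ, σ.dvMap Φ.dv⟩

/-- `Φ.Inst Ψ` : Ψ is an instance of Φ, i.e. the result of a legitimate
substitution, possibly followed by the addition of DV conditions. -/
def Scheme.Inst (Φ Ψ : Scheme) : Prop :=
  ∃ σ : Subst, σ.Legit Φ ∧ Ψ.hyps = Φ.hyps.image (MF.substMF σ) ∧
    Ψ.concl = Φ.concl.substMF σ ∧ σ.dvMap Φ.dv ⊆ Ψ.dv

/-- Metavariables occurring in a list of metaformulas. -/
def listOC (P : List MF) : Set MV := {m | ∃ f ∈ P, m ∈ f.OC}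

/-- The DV conditions of a proof `P` of the scheme `Φ`: those of `Φ`, plus all
pairs {m, n} where m is a dummy metavariable of `P` and n occurs in `P`. -/
def proofDV (Φ : Scheme) (P : List MF) : Set (Sym2 MV) :=
  Φ.dv ∪ {q | ∃ m n : MV, m ∈ listOC P ∧ m ∉ Φ.OC ∧ n ∈ listOC P ∧ q = s(m, n)}

/-- `P` is a proof of the scheme `Φ` from the set `S` of schemes. -/
def IsProof (S : Set Scheme) (Φ : Scheme) (P : List MF) : Prop :=
  P ≠ [] ∧ P.getLast? = some Φ.concl ∧
  ∀ (k : ℕ) (hk : k < P.length),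
    P.get ⟨k, hk⟩ ∈ Φ.hyps ∨
    ∃ hs : Finset MF,
      (∀ h ∈ hs, ∃ (l : ℕ) (hl : l < k), P.get ⟨l, hl.trans hk⟩ = h) ∧
      ∃ Ξ ∈ S, Ξ.Inst ⟨hs, P.get ⟨k, hk⟩, proofDV Φ P⟩

/-- `S ⊢ Φ` : the scheme `Φ` is provable from the set `S` of schemes. -/
def Provable (S : Set Scheme) (Φ : Scheme) : Prop := ∃ P : List MF, IsProof S Φ P

/-! ## Object level: first-order formulas and semantics -/

/-- First-order formulas over the pure language of equality, with
individual variables v_i. -/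
inductive FM : Type
  | eq (i j : ℕ) : FM
  | imp (a b : FM) : FM
  | not (a : FM) : FM
  | all (i : ℕ) (a : FM) : FM
  deriving DecidableEq

/-- Variables occurring in a first-order formula. -/
def FM.vars : FM → Set ℕ
  | .eq i j => {i, j}
  | .imp a b => a.vars ∪ b.vars
  | .not a => a.vars
  | .all i a => insert i a.vars

/-- An object-substitution: variable metavariables go to individual variables,
formula metavariables go to first-order formulas. -/
structure OSubst : Type where
  vr : ℕ → ℕ
  fm : ℕ → FM

/-- Action of an object-substitution on a metaformula, yielding a first-order
formula (an object-instance). -/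
def MF.osubst (τ : OSubst) : MF → FM
  | .phi i => τ.fm i
  | .eq i j => .eq (τ.vr i) (τ.vr j)
  | .imp a b => .imp (a.osubst τ) (b.osubst τ)
  | .not a => .not (a.osubst τ)
  | .all i a => .all (τ.vr i) (a.osubst τ)

/-- Variables occurring in the image of a metavariable. -/
def OSubst.appVars (τ : OSubst) : MV → Set ℕ
  | .vr i => {τ.vr i}
  | .fm i => (τ.fm i).vars

/-- An object-substitution is legitimate on a scheme if images of DV-paired
metavariables share no variables. -/
def OSubst.Legit (τ : OSubst) (Φ : Scheme) : Prop :=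
  ∀ m n : MV, s(m, n) ∈ Φ.dv → τ.appVars m ∩ τ.appVars n = ∅

/-- Evaluation of a first-order formula in a structure with domain `D`
(equality interpreted as equality) under an assignment `ρ`. -/
def FM.eval {D : Type} (ρ : ℕ → D) : FM → Prop
  | .eq i j => ρ i = ρ j
  | .imp a b => a.eval ρ → b.eval ρ
  | .not a => ¬ a.eval ρ
  | .all i a => ∀ d : D, a.eval (Function.update ρ i d)

/-- Validity of a first-order formula in the structure with domain `D`. -/
def FM.Valid (D : Type) (f : FM) : Prop := ∀ ρ : ℕ → D, f.eval ρ

/-- A scheme is true if for every legitimate object-instance and every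
nonempty domain, the conclusion is valid whenever all hypotheses are. -/
def Scheme.IsTrue (Φ : Scheme) : Prop :=
  ∀ τ : OSubst, τ.Legit Φ →
    ∀ D : Type, Nonempty D →
      (∀ h ∈ Φ.hyps, FM.Valid D (h.osubst τ)) → FM.Valid D (Φ.concl.osubst τ)

/-! ## (i,j)-transforms and supertruth -/

/-- Auxiliary: (i,j)-transform with a flag recording whether we are inside the
scope of a quantifier ∀x_i. -/
def MF.transfAux (i j : ℕ) : MF → Bool → MF
  | .phi k, _ => .phi k
  | .eq a b, ins =>
      .eq (if ins = true ∧ a = j then i else a) (if ins = true ∧ b = j then i else b)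
  | .imp a b, ins => .imp (a.transfAux i j ins) (b.transfAux i j ins)
  | .not a, ins => .not (a.transfAux i j ins)
  | .all k a, ins =>
      .all (if ins = true ∧ k = j then i else k) (a.transfAux i j (ins || decide (k = i)))

/-- The (i,j)-transform of a metaformula: replace every occurrence of x_j
lying within the scope of a quantifier ∀x_i by x_i. -/
def MF.transform (i j : ℕ) (f : MF) : MF := f.transfAux i j false

/-- The (i,j)-transform of a scheme: transform hypotheses and conclusion,
keep the DV conditions. -/
def Scheme.transform (i j : ℕ) (Φ : Scheme) : Scheme :=
  ⟨Φ.hyps.image (MF.transform i j), Φ.concl.transform i j, Φ.dv⟩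

/-- The (i,j)-transform (and the {i,j}-transform) is legitimate on a scheme
if {x_i, x_j} is not among its DV conditions. -/
def Scheme.TLegit (i j : ℕ) (Φ : Scheme) : Prop := s(MV.vr i, MV.vr j) ∉ Φ.dv

/-- A (hypothesis-free) scheme is presupertrue if all the legitimate
(i,j)-transforms of all its instances (including itself) are true. -/
def Scheme.PreST (Φ : Scheme) : Prop :=
  ∀ Ψ : Scheme, (Ψ = Φ ∨ Φ.Inst Ψ) → ∀ i j : ℕ, Ψ.TLegit i j → (Ψ.transform i j).IsTrue

/-- A scheme is supertrue if every instance of it (including itself) satisfies: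
whenever all legitimate (i,j)-transforms of all instances of each of its
hypotheses (taken as hypothesis-free schemes with the inherited DV conditions)
are true, all legitimate (i,j)-transforms of all instances of its conclusion
are true. -/
def Scheme.Supertrue (Φ : Scheme) : Prop :=
  ∀ Ψ : Scheme, (Ψ = Φ ∨ Φ.Inst Ψ) →
    (∀ h ∈ Ψ.hyps, Scheme.PreST ⟨∅, h, Ψ.dv⟩) → Scheme.PreST ⟨∅, Ψ.concl, Ψ.dv⟩

/-- The {i,j}-transform of a metaformula: the composite of the (i,j)-transform
and the (j,i)-transform, the one with smaller first index performed first. -/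
def MF.stransform (i j : ℕ) (f : MF) : MF :=
  if i ≤ j then (f.transform i j).transform j i else (f.transform j i).transform i j

/-- The {i,j}-transform of a scheme. -/
def Scheme.stransform (i j : ℕ) (Φ : Scheme) : Scheme :=
  ⟨Φ.hyps.image (MF.stransform i j), Φ.concl.stransform i j, Φ.dv⟩

/-- A metaformula contains no formula metavariables. -/
def MF.FmFree : MF → Prop
  | .phi _ => False
  | .eq _ _ => True
  | .imp a b => a.FmFree ∧ b.FmFree
  | .not a => a.FmFree
  | .all _ a => a.FmFree

/-- A scheme contains no formula metavariables. -/
def Scheme.FmFree (Φ : Scheme) : Prop := (∀ h ∈ Φ.hyps, h.FmFree) ∧ Φ.concl.FmFree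

/-- A (hypothesis-free) scheme is pre-semisupertrue if all the legitimate
{i,j}-transforms of all its instances (including itself) are true. -/
def Scheme.PreSST (Φ : Scheme) : Prop :=
  ∀ Ψ : Scheme, (Ψ = Φ ∨ Φ.Inst Ψ) → ∀ i j : ℕ, Ψ.TLegit i j → (Ψ.stransform i j).IsTrue

/-- A scheme is semisupertrue if it is true and every formula-metavariable-free
instance of it satisfies: whenever all legitimate {i,j}-transforms of all
instances of each of its hypotheses are true, all legitimate {i,j}-transforms
of all instances of its conclusion are true. -/
def Scheme.Semisupertrue (Φ : Scheme) : Prop :=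
  Φ.IsTrue ∧
  ∀ Ψ : Scheme, (Ψ = Φ ∨ Φ.Inst Ψ) → Ψ.FmFree →
    (∀ h ∈ Ψ.hyps, Scheme.PreSST ⟨∅, h, Ψ.dv⟩) → Scheme.PreSST ⟨∅, Ψ.concl, Ψ.dv⟩

/-- A metaformula is quantifier-free. -/
def MF.QFree : MF → Prop
  | .phi _ => True
  | .eq _ _ => True
  | .imp a b => a.QFree ∧ b.QFree
  | .not a => a.QFree
  | .all _ _ => False

/-- A scheme is quantifier-free. -/
def Scheme.QFree (Φ : Scheme) : Prop := (∀ h ∈ Φ.hyps, h.QFree) ∧ Φ.concl.QFree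

/-! ## The axiom schemes of the system TMM
(x = x_0, y = x_1, z = x_2; φ = φ_0, ψ = φ_1, χ = φ_2, θ = φ_3, τ = φ_4) -/

def ax_mp : Scheme := ⟨{.phi 0, .imp (.phi 0) (.phi 1)}, .phi 1, ∅⟩

def ax_minimp : Scheme :=
  ⟨∅, .imp (.phi 0) (.imp (.imp (.phi 1) (.phi 2))
      (.imp (.imp (.imp (.phi 3) (.phi 1)) (.imp (.phi 2) (.phi 4)))
        (.imp (.phi 1) (.phi 4)))), ∅⟩

def ax_peirce : Scheme := ⟨∅, .imp (.imp (.imp (.phi 0) (.phi 1)) (.phi 0)) (.phi 0), ∅⟩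

def ax_contrap : Scheme :=
  ⟨∅, .imp (.imp (.phi 0) (.not (.phi 1))) (.imp (.phi 1) (.not (.phi 0))), ∅⟩

def ax_notelim : Scheme := ⟨∅, .imp (.not (.phi 0)) (.imp (.phi 0) (.phi 1)), ∅⟩

def ax_gen : Scheme := ⟨{.phi 0}, .all 0 (.phi 0), ∅⟩

def ax_ALLdistr : Scheme :=
  ⟨∅, .imp (.all 0 (.imp (.phi 0) (.phi 1))) (.imp (.all 0 (.phi 0)) (.all 0 (.phi 1))), ∅⟩

def ax_spec : Scheme := ⟨∅, .imp (.all 0 (.phi 0)) (.phi 0), ∅⟩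

def ax_modal5 : Scheme :=
  ⟨∅, .imp (.not (.all 0 (.phi 0))) (.all 0 (.not (.all 0 (.phi 0)))), ∅⟩

def ax_vacGen : Scheme := ⟨∅, .imp (.phi 0) (.all 0 (.phi 0)), {s(MV.vr 0, MV.fm 0)}⟩

def ax_ALLcomm : Scheme :=
  ⟨∅, .imp (.all 0 (.all 1 (.phi 0))) (.all 1 (.all 0 (.phi 0))), ∅⟩

def ax_EQrefl : Scheme := ⟨∅, .eq 0 0, ∅⟩

def ax_EQsymm : Scheme := ⟨∅, .imp (.eq 0 1) (.eq 1 0), ∅⟩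

def ax_EQtrans : Scheme := ⟨∅, .imp (.eq 0 1) (.imp (.eq 1 2) (.eq 0 2)), ∅⟩

def ax_denot : Scheme :=
  ⟨∅, .imp (.eq 0 0) (.not (.all 1 (.not (.eq 1 0)))), {s(MV.vr 0, MV.vr 1)}⟩

def ax_subst : Scheme :=
  ⟨∅, .all 0 (.imp (.eq 0 1) (.imp (.phi 0) (.all 0 (.imp (.eq 0 1) (.phi 0))))),
    {s(MV.vr 0, MV.vr 1), s(MV.vr 1, MV.fm 0)}⟩

def ax_ALLeq : Scheme :=
  ⟨∅, .imp (.all 0 (.eq 0 1)) (.imp (.all 0 (.phi 0)) (.all 1 (.phi 0))), ∅⟩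

def ax_genEq : Scheme :=
  ⟨∅, .imp (.not (.all 0 (.eq 0 1)))
      (.imp (.not (.all 0 (.eq 0 2))) (.imp (.eq 1 2) (.all 0 (.eq 1 2)))), ∅⟩

def ax_modalD : Scheme := ⟨∅, .imp (.all 0 (.not (.phi 0))) (.not (.all 0 (.phi 0))), ∅⟩

def ax_modal4 : Scheme := ⟨∅, .imp (.all 0 (.phi 0)) (.all 0 (.all 0 (.phi 0))), ∅⟩

/-- The system TMM. -/
def TMM : Set Scheme :=
  {ax_mp, ax_minimp, ax_peirce, ax_contrap, ax_notelim, ax_gen, ax_ALLdistr, ax_spec,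
   ax_modal5, ax_vacGen, ax_ALLcomm, ax_EQrefl, ax_EQsymm, ax_EQtrans, ax_denot,
   ax_subst, ax_ALLeq, ax_genEq}

/-- The subsystem T. -/
def Tsys : Set Scheme :=
  {ax_mp, ax_minimp, ax_peirce, ax_contrap, ax_notelim, ax_gen, ax_ALLdistr, ax_vacGen,
   ax_EQrefl, ax_EQsymm, ax_EQtrans, ax_denot}

/-!
The proof is by soundness for a nonstandard truth notion: an object formula is replaced by its
`(0, 1)`-transform, in which `v_1` is read as `v_0` inside the scope of every quantifier `∀ v_0`,
and is then evaluated in the usual way. Apart from `spec` and `ALLeq`, every axiom scheme of TMM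
survives this reading, provided that metavariables under a DV condition have images sharing no
variable even after `v_0` and `v_1` have been identified. A DV condition arising in a proof of a
scheme without DV conditions involves a dummy metavariable, which can be sent to a fresh variable,
so the proviso costs nothing. On the other hand `∀ v_0 (v_0 ≡ v_1) → v_0 ≡ v_1` becomes
`∀ v_0 (v_0 ≡ v_0) → v_0 ≡ v_1`, which fails in a two-element domain.
-/

/-! ### Transforms of object formulas -/

/-- The effect of the `(i, j)`-transform on the variable `v_k`, where `b` records whether the
occurrence lies in the scope of a quantifier `∀ v_i`. -/
def transformVar (i j : ℕ) (b : Bool) (k : ℕ) : ℕ := if b = true ∧ k = j then i else k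

/-- The `(i, j)`-transform of an object formula, the analogue of `MF.transfAux` for first-order
formulas. The flag `b` records whether we are inside the scope of a quantifier `∀ v_i`. -/
def FM.transform (i j : ℕ) : FM → Bool → FM
  | .eq k l, b => .eq (transformVar i j b k) (transformVar i j b l)
  | .imp f g, b => .imp (f.transform i j b) (g.transform i j b)
  | .not f, b => .not (f.transform i j b)
  | .all k f, b => .all (transformVar i j b k) (f.transform i j (b || decide (k = i)))

/-- Validity of the `(i, j)`-transform of an object formula in the structure with domain `D`. Both
values of the flag are required, so that validity is preserved by generalization over `v_i`. -/
def FM.TransformValid (i j : ℕ) (D : Type) (f : FM) : Prop :=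
  ∀ b, FM.Valid D (f.transform i j b)

section Transform

variable {i j : ℕ}

theorem transformVar_or_self (b : Bool) (k : ℕ) :
    transformVar i j (b || decide (k = i)) k = transformVar i j b k := by
  grind [transformVar]

theorem transformVar_true_transformVar (b : Bool) (k : ℕ) :
    transformVar i j true (transformVar i j b k) = transformVar i j true k := by
  grind [transformVar]

theorem transformVar_ne {k l : ℕ} (h : transformVar i j true k ≠ transformVar i j true l)
    (b c : Bool) : transformVar i j b k ≠ transformVar i j c l := fun hkl ↦
  h <| by rw [← transformVar_true_transformVar b k, hkl, transformVar_true_transformVar]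

theorem transformVar_lt {N k : ℕ} (hi : i < N) (hk : k < N) (b : Bool) :
    transformVar i j b k < N := by
  grind [transformVar]

theorem transformVar_of_ne {k : ℕ} (hk : k ≠ j) (b : Bool) : transformVar i j b k = k := by
  grind [transformVar]

theorem transformVar_or_of_ne {k l : ℕ} (h : transformVar i j true k ≠ transformVar i j true l)
    (b : Bool) : transformVar i j (b || decide (k = i)) l = transformVar i j b l := by
  grind [transformVar]

theorem transformVar_or_of_or_ne {b : Bool} {k l : ℕ}
    (h : transformVar i j (b || decide (k = i)) l ≠ transformVar i j b k) :
    transformVar i j (b || decide (k = i)) l = transformVar i j b l := by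
  grind [transformVar]

theorem FM.vars_transform_subset (f : FM) (b : Bool) :
    (f.transform i j b).vars ⊆ transformVar i j b '' f.vars := by
  induction f generalizing b with
  | eq k l => simp [FM.transform, FM.vars, Set.image_pair]
  | imp f g ihf ihg =>
    simpa only [FM.transform, FM.vars, Set.image_union] using Set.union_subset_union (ihf b) (ihg b)
  | not _ ih => exact ih b
  | all k f ih =>
    simp only [FM.transform, FM.vars, Set.image_insert_eq]
    rintro p (rfl | hp)
    · exact Set.mem_insert _ _
    · obtain ⟨q, hq, rfl⟩ := ih _ hp
      have transformVar_or : transformVar i j (b || decide (k = i)) q = transformVar i j b k ∨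
          transformVar i j (b || decide (k = i)) q = transformVar i j b q := by
        grind [transformVar]
      exact transformVar_or.imp id fun h ↦ ⟨q, hq, h.symm⟩

theorem FM.transform_of_notMem_vars {f : FM} (hf : j ∉ f.vars) (b : Bool) :
    f.transform i j b = f := by
  induction f generalizing b <;> grind [FM.transform, FM.vars, transformVar]

theorem FM.transform_or_of_forall_ne {f : FM} {k : ℕ}
    (h : ∀ l ∈ f.vars, transformVar i j true k ≠ transformVar i j true l) (b : Bool) :
    f.transform i j (b || decide (k = i)) = f.transform i j b := by
  by_cases hk : k = i
  · have hj : j ∉ f.vars := fun hj ↦ h j hj (by simp [transformVar, hk])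
    rw [FM.transform_of_notMem_vars hj, FM.transform_of_notMem_vars hj]
  · simp [hk]

theorem FM.transformVar_notMem_vars_transform {f : FM} {k : ℕ}
    (h : ∀ l ∈ f.vars, transformVar i j true k ≠ transformVar i j true l) (b : Bool) :
    transformVar i j b k ∉ (f.transform i j b).vars := fun hk ↦
  let ⟨l, hl, hlk⟩ := f.vars_transform_subset b hk
  transformVar_ne (h l hl) b b hlk.symm

theorem FM.notMem_vars_transform_true (hij : i ≠ j) (f : FM) :
    j ∉ (f.transform i j true).vars := by
  intro hj
  obtain ⟨l, -, hl⟩ := f.vars_transform_subset true hj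
  grind [transformVar]

end Transform

section Eval

variable {i j : ℕ} {D : Type}

theorem FM.eval_congr {f : FM} {ρ ρ' : ℕ → D} (h : ∀ k ∈ f.vars, ρ k = ρ' k) :
    f.eval ρ ↔ f.eval ρ' := by
  induction f generalizing ρ ρ' with
  | eq k l => rw [FM.eval, FM.eval, h k (.inl rfl), h l (.inr rfl)]
  | imp f g ihf ihg =>
    exact imp_congr (ihf fun k hk ↦ h k (.inl hk)) (ihg fun k hk ↦ h k (.inr hk))
  | not f ih => exact not_congr (ih h)
  | all k f ih =>
    refine forall_congr' fun d ↦ ih fun l hl ↦ ?_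
    simp only [Function.update_apply, h l (.inr hl)]

theorem FM.eval_update_of_notMem_vars {f : FM} {k : ℕ} (hk : k ∉ f.vars) (ρ : ℕ → D) (d : D) :
    f.eval (Function.update ρ k d) ↔ f.eval ρ :=
  FM.eval_congr fun _ hl ↦ Function.update_of_ne (ne_of_mem_of_not_mem hl hk) _ _

theorem FM.eval_transform_all_all_comm (k l : ℕ) (f : FM) (b : Bool) {ρ : ℕ → D}
    (h : ((FM.all k (.all l f)).transform i j b).eval ρ) :
    ((FM.all l (.all k f)).transform i j b).eval ρ := by
  by_cases hkl : k = l
  · exact hkl ▸ hkl ▸ h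
  simp only [FM.transform, FM.eval, Bool.or_right_comm b (decide (l = i))] at h ⊢
  intro d e
  by_cases htv : transformVar i j true k = transformVar i j true l
  · -- Here `{k, l} = {i, j}`, so both double quantifiers amount to `∀ v_i`.
    have hij : i ≠ j ∧ (k = i ∧ l = j ∨ k = j ∧ l = i) := by grind [transformVar]
    have hb : (b || decide (k = i) || decide (l = i)) = true := by grind
    rw [hb] at h ⊢
    refine (FM.eval_congr fun p hp ↦ ?_).1 (h e e)
    have hpj : p ≠ j := fun hpj ↦ f.notMem_vars_transform_true hij.1 (hpj ▸ hp)
    grind [transformVar, Function.update_apply]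
  · rw [transformVar_or_of_ne (Ne.symm htv), Function.update_comm (transformVar_ne htv b b).symm]
    simpa only [transformVar_or_of_ne htv] using h e d

end Eval

/-! ### Truth of schemes under transforms -/

/-- The images under `τ` of metavariables paired in `Q` share no variables, even after `v_j` has
been identified with `v_i`. This is the legitimacy condition matching the `(i, j)`-transform.
Diagonal pairs are ignored, since `proofDV` contains `{m, m}` for every dummy metavariable `m`. -/
def OSubst.Separates (i j : ℕ) (τ : OSubst) (Q : Set (Sym2 MV)) : Prop :=
  ∀ ⦃m n : MV⦄, s(m, n) ∈ Q → m ≠ n → ∀ p ∈ τ.appVars m, ∀ q ∈ τ.appVars n,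
    transformVar i j true p ≠ transformVar i j true q

/-- The analogue of `Scheme.IsTrue` for `(i, j)`-transforms of object-instances, in a fixed
domain `D`. -/
def Scheme.TransformTrue (i j : ℕ) (D : Type) (Φ : Scheme) : Prop :=
  ∀ τ : OSubst, τ.Separates i j Φ.dv →
    (∀ h ∈ Φ.hyps, FM.TransformValid i j D (h.osubst τ)) →
      FM.TransformValid i j D (Φ.concl.osubst τ)

/-- The object-substitution acting as the substitution `σ` followed by `τ`. -/
def OSubst.comp (τ : OSubst) (σ : Subst) : OSubst where
  vr k := τ.vr (σ.vr k)
  fm k := (σ.fm k).osubst τ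

section Instances

variable {i j : ℕ} {D : Type}

theorem MF.osubst_substMF (τ : OSubst) (σ : Subst) (f : MF) :
    (f.substMF σ).osubst τ = f.osubst (τ.comp σ) := by
  induction f <;> simp_all [MF.substMF, MF.osubst, OSubst.comp]

theorem MF.vars_osubst (τ : OSubst) (f : MF) :
    (f.osubst τ).vars = ⋃ m ∈ f.OC, τ.appVars m := by
  induction f with
  | phi k => simp [MF.osubst, MF.OC, OSubst.appVars]
  | eq k l =>
    simp only [MF.osubst, FM.vars, MF.OC, OSubst.appVars, Set.biUnion_insert,
      Set.biUnion_singleton, Set.singleton_union]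
  | imp f g ihf ihg => simp only [MF.osubst, FM.vars, MF.OC, Set.biUnion_union, ihf, ihg]
  | not _ ih => exact ih
  | all k f ih =>
    simp only [MF.osubst, FM.vars, MF.OC, OSubst.appVars, Set.biUnion_insert,
      Set.singleton_union, ih]

theorem OSubst.appVars_comp (τ : OSubst) (σ : Subst) (m : MV) :
    (τ.comp σ).appVars m = ⋃ n ∈ σ.appMV m, τ.appVars n := by
  cases m with
  | vr k => simp [OSubst.comp, OSubst.appVars, Subst.appMV]
  | fm k => exact MF.vars_osubst τ (σ.fm k)

theorem OSubst.Separates.mono {τ : OSubst} {Q R : Set (Sym2 MV)} (h : τ.Separates i j R)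
    (hQR : Q ⊆ R) : τ.Separates i j Q :=
  fun _ _ hmn ↦ h (hQR hmn)

theorem OSubst.Separates.comp {τ : OSubst} {σ : Subst} {Ξ : Scheme}
    (h : τ.Separates i j (σ.dvMap Ξ.dv)) (hσ : σ.Legit Ξ) :
    (τ.comp σ).Separates i j Ξ.dv := by
  intro m n hmn _ p hp q hq
  simp only [OSubst.appVars_comp, Set.mem_iUnion₂] at hp hq
  obtain ⟨m', hm', hp⟩ := hp
  obtain ⟨n', hn', hq⟩ := hq
  have hne : m' ≠ n' := (Set.disjoint_iff_inter_eq_empty.2 (hσ m n hmn)).ne_of_mem hm' hn'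
  exact h ⟨m, n, m', n', hmn, hm', hn', rfl⟩ hne p hp q hq

theorem Scheme.TransformTrue.of_inst {Ξ Ψ : Scheme} (h : Ξ.TransformTrue i j D)
    (hI : Ξ.Inst Ψ) : Ψ.TransformTrue i j D := by
  obtain ⟨σ, hσ, hhyps, hconcl, hdv⟩ := hI
  intro τ hτ hvalid
  rw [hconcl, MF.osubst_substMF]
  refine h _ ((hτ.mono hdv).comp hσ) fun f hf ↦ ?_
  rw [← MF.osubst_substMF]
  exact hvalid _ (hhyps ▸ Finset.mem_image_of_mem _ hf)

end Instances

/-! ### Soundness -/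

/-- An injective numbering of the metavariables, used to choose fresh variables. -/
def MV.code : MV → ℕ
  | .vr k => 2 * k
  | .fm k => 2 * k + 1

open scoped Classical in
/-- Modify `τ` outside the set `A` of metavariables so that each metavariable `m ∉ A` is mapped to
(a formula in) the variable `v_(N + m.code)`, which is fresh when `N` is large. -/
noncomputable def OSubst.freshen (τ : OSubst) (A : Set MV) (N : ℕ) : OSubst where
  vr k := if MV.vr k ∈ A then τ.vr k else N + (MV.vr k).code
  fm k := if MV.fm k ∈ A then τ.fm k else .eq (N + (MV.fm k).code) (N + (MV.fm k).code)

section Soundness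

variable {i j N : ℕ} {D : Type} {τ : OSubst} {A : Set MV}

theorem MV.code_injective : Function.Injective MV.code := by
  rintro (k | k) (l | l) h <;> simp only [MV.code] at h <;> grind

theorem MF.osubst_freshen {f : MF} (hf : f.OC ⊆ A) :
    f.osubst (τ.freshen A N) = f.osubst τ := by
  induction f with
  | phi k => exact if_pos (hf rfl)
  | eq k l => exact congrArg₂ FM.eq (if_pos (hf (.inl rfl))) (if_pos (hf (.inr rfl)))
  | imp f g ihf ihg =>
    rw [MF.OC, Set.union_subset_iff] at hf
    exact congrArg₂ FM.imp (ihf hf.1) (ihg hf.2)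
  | not f ih => exact congrArg FM.not (ih hf)
  | all k f ih =>
    rw [MF.OC, Set.insert_subset_iff] at hf
    exact congrArg₂ FM.all (if_pos hf.1) (ih hf.2)

theorem OSubst.appVars_freshen_of_mem {m : MV} (hm : m ∈ A) :
    (τ.freshen A N).appVars m = τ.appVars m := by
  cases m <;> simp [OSubst.appVars, OSubst.freshen, hm]

theorem OSubst.appVars_freshen_of_notMem {m : MV} (hm : m ∉ A) :
    (τ.freshen A N).appVars m = {N + m.code} := by
  cases m <;> simp [OSubst.appVars, OSubst.freshen, FM.vars, hm]

theorem OSubst.Separates.freshen {Q : Set (Sym2 MV)}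
    (h : τ.Separates i j {q ∈ Q | ∀ m ∈ q, m ∈ A}) (hi : i < N) (hj : j < N)
    (hN : ∀ m ∈ A, ∀ p ∈ τ.appVars m, p < N) : (τ.freshen A N).Separates i j Q := by
  have old {m p} (hm : m ∈ A) (hp : p ∈ (τ.freshen A N).appVars m) :
      p ∈ τ.appVars m ∧ transformVar i j true p < N := by
    rw [appVars_freshen_of_mem hm] at hp
    exact ⟨hp, transformVar_lt hi (hN m hm p hp) true⟩
  have new {m p} (hm : m ∉ A) (hp : p ∈ (τ.freshen A N).appVars m) :
      transformVar i j true p = N + m.code := by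
    rw [appVars_freshen_of_notMem hm, Set.mem_singleton_iff] at hp
    rw [hp, transformVar_of_ne (by lia)]
  intro m n hmn hne p hp q hq
  have hcode := MV.code_injective.ne hne
  by_cases hm : m ∈ A <;> by_cases hn : n ∈ A
  · exact h ⟨hmn, by simp [hm, hn]⟩ hne p (old hm hp).1 q (old hn hq).1
  · have := (old hm hp).2
    have := new hn hq
    lia
  · have := new hm hp
    have := (old hn hq).2
    lia
  · rw [new hm hp, new hn hq]
    lia

theorem MF.finite_OC (f : MF) : f.OC.Finite := by
  induction f <;> simp_all [MF.OC]

theorem Scheme.finite_OC (Φ : Scheme) : Φ.OC.Finite := by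
  refine .union ?_ Φ.concl.finite_OC
  convert Φ.hyps.finite_toSet.biUnion fun f _ ↦ f.finite_OC using 1
  ext m
  simp

theorem FM.finite_vars (f : FM) : f.vars.Finite := by
  induction f <;> simp_all [FM.vars]

theorem OSubst.finite_appVars (τ : OSubst) (m : MV) : (τ.appVars m).Finite := by
  cases m with
  | vr k => exact Set.finite_singleton _
  | fm k => exact (τ.fm k).finite_vars

theorem OSubst.Separates.exists_freshen_proofDV {Φ : Scheme} (h : τ.Separates i j Φ.dv)
    (P : List MF) : ∃ N, (τ.freshen Φ.OC N).Separates i j (proofDV Φ P) := by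
  obtain ⟨M, hM⟩ := (Φ.finite_OC.biUnion fun m _ ↦ τ.finite_appVars m).bddAbove
  refine ⟨max M (max i j) + 1, Separates.freshen (h.mono ?_) (by lia) (by lia) fun m hm p hp ↦ ?_⟩
  · rintro q ⟨hq | ⟨m, n, -, hm, -, rfl⟩, hOC⟩
    · exact hq
    · exact absurd (hOC m (Sym2.mem_mk_left m n)) hm
  · have : p ≤ M := hM (Set.mem_biUnion hm hp)
    lia

theorem IsProof.transformValid {S : Set Scheme} {Φ : Scheme} {P : List MF}
    (hP : IsProof S Φ P) (hS : ∀ Ξ ∈ S, Ξ.TransformTrue i j D)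
    (hτ : τ.Separates i j (proofDV Φ P))
    (hhyps : ∀ h ∈ Φ.hyps, FM.TransformValid i j D (h.osubst τ)) :
    FM.TransformValid i j D (Φ.concl.osubst τ) := by
  obtain ⟨-, hlast, hstep⟩ := hP
  have entry (k : ℕ) (hk : k < P.length) :
      FM.TransformValid i j D ((P.get ⟨k, hk⟩).osubst τ) := by
    induction k using Nat.strong_induction_on with
    | _ k ih =>
      obtain hmem | ⟨hs, hearlier, Ξ, hΞ, hI⟩ := hstep k hk
      · exact hhyps _ hmem
      · refine (hS Ξ hΞ).of_inst hI τ hτ fun f hf ↦ ?_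
        obtain ⟨l, hl, rfl⟩ := hearlier f hf
        exact ih l hl _
  obtain ⟨⟨k, hk⟩, hget⟩ := List.mem_iff_get.1 (List.mem_of_getLast? hlast)
  exact hget ▸ entry k hk

theorem Provable.transformTrue {S : Set Scheme} {Φ : Scheme} (hΦ : Provable S Φ)
    (hS : ∀ Ξ ∈ S, Ξ.TransformTrue i j D) : Φ.TransformTrue i j D := by
  intro τ hτ hhyps
  obtain ⟨P, hP⟩ := hΦ
  obtain ⟨N, hN⟩ := hτ.exists_freshen_proofDV P
  have hconcl : Φ.concl.OC ⊆ Φ.OC := Set.subset_union_right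
  have hhyp {f : MF} (hf : f ∈ Φ.hyps) : f.OC ⊆ Φ.OC := fun m hm ↦ .inl ⟨f, hf, hm⟩
  rw [← MF.osubst_freshen hconcl]
  refine hP.transformValid hS hN fun f hf ↦ ?_
  rw [MF.osubst_freshen (hhyp hf)]
  exact hhyps f hf

end Soundness

/-! ### The axiom schemes -/

section Axioms

variable {i j : ℕ} {D : Type}

theorem transformTrue_ax_mp : ax_mp.TransformTrue i j D := by
  intro τ _ hyps b ρ
  exact hyps (.imp (.phi 0) (.phi 1)) (by simp [ax_mp]) b ρ (hyps (.phi 0) (by simp [ax_mp]) b ρ)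

theorem transformTrue_ax_minimp : ax_minimp.TransformTrue i j D := by
  intro τ _ _ b ρ
  simp only [ax_minimp, MF.osubst, FM.transform, FM.eval]
  tauto

theorem transformTrue_ax_peirce : ax_peirce.TransformTrue i j D := by
  intro τ _ _ b ρ
  simp only [ax_peirce, MF.osubst, FM.transform, FM.eval]
  tauto

theorem transformTrue_ax_contrap : ax_contrap.TransformTrue i j D :=
  fun _ _ _ _ _ h hψ hφ ↦ h hφ hψ

theorem transformTrue_ax_notelim : ax_notelim.TransformTrue i j D :=
  fun _ _ _ _ _ hnot h ↦ absurd h hnot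

theorem transformTrue_ax_gen : ax_gen.TransformTrue i j D :=
  fun _ _ hyps _ _ _ ↦ hyps (.phi 0) (Finset.mem_singleton_self _) _ _

theorem transformTrue_ax_ALLdistr : ax_ALLdistr.TransformTrue i j D :=
  fun _ _ _ _ _ himp h d ↦ himp d (h d)

theorem transformTrue_ax_modal5 : ax_modal5.TransformTrue i j D := by
  intro τ _ _ b ρ
  simp only [ax_modal5, MF.osubst, FM.transform, FM.eval, transformVar_or_self,
    Function.update_idem, Bool.or_assoc, Bool.or_self]
  exact fun h _ ↦ h

theorem transformTrue_ax_vacGen : ax_vacGen.TransformTrue i j D := by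
  intro τ hτ _ b ρ hφ d
  have hne : ∀ p ∈ (τ.fm 0).vars, transformVar i j true (τ.vr 0) ≠ transformVar i j true p :=
    hτ (m := .vr 0) (n := .fm 0) rfl (by simp) _ rfl
  have hφ : ((τ.fm 0).transform i j b).eval ρ := hφ
  rw [← FM.eval_update_of_notMem_vars (FM.transformVar_notMem_vars_transform hne b) ρ d,
    ← FM.transform_or_of_forall_ne hne] at hφ
  exact hφ

theorem transformTrue_ax_ALLcomm : ax_ALLcomm.TransformTrue i j D :=
  fun τ _ _ b _ h ↦ FM.eval_transform_all_all_comm (τ.vr 0) (τ.vr 1) (τ.fm 0) b h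

theorem transformTrue_ax_EQrefl : ax_EQrefl.TransformTrue i j D :=
  fun _ _ _ _ _ ↦ rfl

theorem transformTrue_ax_EQsymm : ax_EQsymm.TransformTrue i j D :=
  fun _ _ _ _ _ hxy ↦ hxy.symm

theorem transformTrue_ax_EQtrans : ax_EQtrans.TransformTrue i j D :=
  fun _ _ _ _ _ hxy hyz ↦ hxy.trans hyz

theorem transformTrue_ax_denot : ax_denot.TransformTrue i j D := by
  intro τ hτ _ b ρ
  have hxy : transformVar i j true (τ.vr 0) ≠ transformVar i j true (τ.vr 1) :=
    hτ (m := .vr 0) (n := .vr 1) rfl (by simp) _ rfl _ rfl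
  simp only [ax_denot, MF.osubst, FM.transform, FM.eval, transformVar_or_self,
    Function.update_self, Function.update_of_ne (transformVar_ne hxy _ b)]
  exact fun _ h ↦ h _ rfl

theorem transformTrue_ax_subst : ax_subst.TransformTrue i j D := by
  intro τ hτ _ b ρ
  have hxy : transformVar i j true (τ.vr 0) ≠ transformVar i j true (τ.vr 1) :=
    hτ (m := .vr 0) (n := .vr 1) (by simp [ax_subst]) (by simp) _ rfl _ rfl
  simp only [ax_subst, MF.osubst, FM.transform, FM.eval, transformVar_or_self, Bool.or_assoc,
    Bool.or_self, Function.update_idem, Function.update_self,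
    Function.update_of_ne (transformVar_ne hxy.symm _ b)]
  rintro _ rfl hφ _ rfl
  exact hφ

theorem transformTrue_ax_genEq : ax_genEq.TransformTrue i j D := by
  intro τ _ _ b ρ
  simp only [ax_genEq, MF.osubst, FM.transform, FM.eval, transformVar_or_self]
  generalize τ.vr 0 = x, τ.vr 1 = y, τ.vr 2 = z
  intro hxy hxz hyz d
  have ne_of_not_forall {k : ℕ} (h : ¬ ∀ d, Function.update ρ (transformVar i j b x) d
      (transformVar i j b x) = Function.update ρ (transformVar i j b x) d
        (transformVar i j (b || decide (x = i)) k)) :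
      transformVar i j (b || decide (x = i)) k ≠ transformVar i j b x :=
    fun hk ↦ h fun d ↦ by rw [hk]
  have hy := ne_of_not_forall hxy
  have hz := ne_of_not_forall hxz
  rw [Function.update_of_ne hy, Function.update_of_ne hz,
    transformVar_or_of_or_ne hy, transformVar_or_of_or_ne hz, hyz]

theorem transformTrue_of_mem_TMM_diff {Ξ : Scheme} (hΞ : Ξ ∈ TMM \ {ax_spec, ax_ALLeq}) :
    Ξ.TransformTrue i j D := by
  obtain ⟨hmem, hne⟩ := hΞ
  simp only [Set.mem_insert_iff, Set.mem_singleton_iff, not_or] at hne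
  rcases hmem with rfl | rfl | rfl | rfl | rfl | rfl | rfl | rfl | rfl | rfl | rfl | rfl | rfl |
    rfl | rfl | rfl | rfl | rfl
  · exact transformTrue_ax_mp
  · exact transformTrue_ax_minimp
  · exact transformTrue_ax_peirce
  · exact transformTrue_ax_contrap
  · exact transformTrue_ax_notelim
  · exact transformTrue_ax_gen
  · exact transformTrue_ax_ALLdistr
  · exact absurd rfl hne.1
  · exact transformTrue_ax_modal5
  · exact transformTrue_ax_vacGen
  · exact transformTrue_ax_ALLcomm
  · exact transformTrue_ax_EQrefl
  · exact transformTrue_ax_EQsymm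
  · exact transformTrue_ax_EQtrans
  · exact transformTrue_ax_denot
  · exact transformTrue_ax_subst
  · exact absurd rfl hne.2
  · exact transformTrue_ax_genEq

end Axioms

theorem not_transformValid_all_eq_imp_eq :
    ¬ FM.TransformValid 0 1 Bool (.imp (.all 0 (.eq 0 1)) (.eq 0 1)) := by
  intro h
  have heq : decide (0 = 0) = decide (1 = 0) := h false (fun k ↦ decide (k = 0)) fun _ ↦ rfl
  simp at heq

theorem not_provable_of_osubst_eq {Φ : Scheme} (hhyps : Φ.hyps = ∅) (hdv : Φ.dv = ∅) (τ : OSubst)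
    (hτ : Φ.concl.osubst τ = .imp (.all 0 (.eq 0 1)) (.eq 0 1)) :
    ¬ Provable (TMM \ {ax_spec, ax_ALLeq}) Φ := by
  intro hΦ
  refine not_transformValid_all_eq_imp_eq (hτ ▸ ?_)
  exact hΦ.transformTrue (fun _ ↦ transformTrue_of_mem_TMM_diff) τ
    (by simp [hdv, OSubst.Separates]) (by simp [hhyps])

/-- The axiom scheme spec is not provable from TMM ∖ {spec, ALLeq}; moreover,
even its formula-metavariable-free instance ∀x x≡y → x≡y is not provable
from TMM ∖ {spec, ALLeq}. -/
theorem spec_independent :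
    ¬ Provable (TMM \ {ax_spec, ax_ALLeq}) ax_spec ∧
    ¬ Provable (TMM \ {ax_spec, ax_ALLeq})
        ⟨∅, .imp (.all 0 (.eq 0 1)) (.eq 0 1), ∅⟩ := by
  let τ : OSubst := ⟨id, fun _ ↦ .eq 0 1⟩
  exact ⟨not_provable_of_osubst_eq rfl rfl τ rfl, not_provable_of_osubst_eq rfl rfl τ rfl⟩
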